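/- If G is a connected graph with biconnected components C_1, ..., C_ℓ, then max_i tww(C_i) ≤ tww(G) ≤ max_i tww(C_i) + 2. -/

import Mathlib

/-!
The lower bound is monotonicity of twin-width under induced subgraphs: the traces of a
contraction sequence on the induced subgraph form a contraction sequence (with idle steps) of no
larger width.

For the upper bound, let `d` bound the twin-width of every connected induced subgraph without a
cut vertex; by monotonicity the maximum over the blocks is such a bound. A stronger assertion,
`reach_main`, is proved by induction on a connected vertex set `W`. It concerns a root `r ∈ W`
and pendant parts `pen w`, one for each `w ∈ W`, which are joined to the rest only through `w`;
it says that everything except `{r}` can be contracted to a single pendant part of `r` at width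
at most `d + 2`, while `{r}` stays a part throughout.

If `W` has no cut vertex, a contraction sequence of `G[W]` of width `d` is followed, with `r`
removed from its part and with the pendant parts of a part of `G[W]` merged into one pendant
part of that part; the pendant part of `r` is kept apart until the end. A part then gains at
most two red edges, one to `{r}` and one to its pendant part (`width_fam`). The two pendant
parts involved in a merge are merged before the parts carrying them, so that a pendant part
never sees more than two parts.

If `c` is a cut vertex, `W = W₁ ∪ W₂` with `W₁ ∩ W₂ = {c}`, `r ∈ W₁` and no edges between
`W₁ \ {c}` and `W₂ \ {c}`. By induction `W₂` is contracted to a pendant part of its root `c`;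
the rest of the graph sees this contraction only through `{c}`, which is joined to the remaining
parts without red edges, so the width does not suffer (`Reach.frame`). Then the induction
hypothesis applies to `W₁` with the enlarged pendant part at `c`.
-/

open scoped Classical

noncomputable section

/-- A trigraph: a finite graph whose edges are colored black or red. -/
structure Trigraph (V : Type*) where
  black : V → V → Prop
  red : V → V → Prop
  black_symm : ∀ u v, black u v → black v u
  red_symm : ∀ u v, red u v → red v u
  black_irrefl : ∀ v, ¬ black v v
  red_irrefl : ∀ v, ¬ red v v
  not_black_and_red : ∀ u v, ¬ (black u v ∧ red u v)

variable {V : Type*}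

/-- A simple graph seen as a trigraph with no red edges. -/
def SimpleGraph.toTrigraph (G : SimpleGraph V) : Trigraph V where
  black := G.Adj
  red _ _ := False
  black_symm _ _ h := h.symm
  red_symm _ _ h := h.elim
  black_irrefl _ h := G.irrefl h
  red_irrefl _ h := h
  not_black_and_red _ _ h := h.2

/-- Induced subtrigraph on a set of vertices. -/
def Trigraph.induce (G : Trigraph V) (s : Set V) : Trigraph s where
  black u v := G.black u.1 v.1
  red u v := G.red u.1 v.1
  black_symm _ _ h := G.black_symm _ _ h
  red_symm _ _ h := G.red_symm _ _ h
  black_irrefl v := G.black_irrefl v.1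
  red_irrefl v := G.red_irrefl v.1
  not_black_and_red u v := G.not_black_and_red u.1 v.1

/-- The discrete partition of the vertex set into singletons. -/
def discretePart (V : Type*) [Fintype V] : Finset (Finset V) :=
  Finset.univ.image fun v => ({v} : Finset V)

/-- `Q` is obtained from the partition `P` by merging (contracting) two distinct parts. -/
def MergeStep (P Q : Finset (Finset V)) : Prop :=
  ∃ A ∈ P, ∃ B ∈ P, A ≠ B ∧ Q = insert (A ∪ B) ((P.erase A).erase B)

/-- Two parts are joined by a red edge in the quotient trigraph if there is a red edge
between them, or if they are not homogeneously connected by black edges. -/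
def Trigraph.redAdj (G : Trigraph V) (A B : Finset V) : Prop :=
  A ≠ B ∧ ((∃ a ∈ A, ∃ b ∈ B, G.red a b) ∨
    ((∃ a ∈ A, ∃ b ∈ B, G.black a b) ∧ ¬ ∀ a ∈ A, ∀ b ∈ B, G.black a b))

/-- The red degree of a part `A` in the quotient of `G` by the partition `P`. -/
def Trigraph.redDeg (G : Trigraph V) (P : Finset (Finset V)) (A : Finset V) : ℕ :=
  (P.filter fun B => G.redAdj A B).card

/-- The maximum red degree of the quotient of `G` by the partition `P`. -/
def Trigraph.maxRedDeg (G : Trigraph V) (P : Finset (Finset V)) : ℕ :=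
  P.sup fun A => G.redDeg P A

/-- A contraction sequence of partitions: starts with the discrete partition, and each
step merges two parts. -/
def IsCSeq (V : Type*) [Fintype V] (len : ℕ) (f : ℕ → Finset (Finset V)) : Prop :=
  f 0 = discretePart V ∧ ∀ i < len, MergeStep (f i) (f (i + 1))

/-- The twin-width of a trigraph: the minimum over all complete contraction sequences of
the maximum red degree attained. -/
def Trigraph.tww [Fintype V] (G : Trigraph V) : ℕ :=
  sInf { w | ∃ f : ℕ → Finset (Finset V),
    IsCSeq V (Fintype.card V - 1) f ∧
    f (Fintype.card V - 1) = {Finset.univ} ∧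
    ∀ i ≤ Fintype.card V - 1, G.maxRedDeg (f i) ≤ w }

/-- The final partition of a `U`-contraction sequence: `U` is one part,
all other vertices are singletons. -/
def finalOn (V : Type*) [Fintype V] (U : Finset V) : Finset (Finset V) :=
  insert U ((Finset.univ \ U).image fun v => ({v} : Finset V))

/-- `tww_U(G)`: the minimum width of a partial contraction sequence involving only
vertices of `U` and contracting `U` into a single part. -/
def Trigraph.twwOn [Fintype V] (G : Trigraph V) (U : Finset V) : ℕ :=
  sInf { w | ∃ f : ℕ → Finset (Finset V),
    IsCSeq V (U.card - 1) f ∧ f (U.card - 1) = finalOn V U ∧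
    ∀ i ≤ U.card - 1, G.maxRedDeg (f i) ≤ w }

/-- A partition respects `A` if all vertices of `A` are singleton parts of red degree `0`. -/
def Trigraph.Respects (G : Trigraph V) (A : Finset V) (P : Finset (Finset V)) : Prop :=
  (∀ a ∈ A, ({a} : Finset V) ∈ P) ∧ ∀ a ∈ A, G.redDeg P {a} = 0

/-- A partition respecting `A` is complete if no two parts outside `A` have the same
(black) neighborhood in `A`. -/
def Trigraph.CompleteFor (G : Trigraph V) (A : Finset V) (P : Finset (Finset V)) : Prop :=
  ∀ B ∈ P, ∀ C ∈ P, B ≠ C → Disjoint B A → Disjoint C A →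
    ¬ ∀ a ∈ A, ((∃ b ∈ B, G.black b a) ↔ ∃ c ∈ C, G.black c a)

/-- `tww(G, A)`: the minimum width of a complete contraction sequence respecting `A`. -/
def Trigraph.twwR [Fintype V] (G : Trigraph V) (A : Finset V) : ℕ :=
  sInf { w | ∃ (len : ℕ) (f : ℕ → Finset (Finset V)), IsCSeq V len f ∧
    (∀ i ≤ len, G.Respects A (f i)) ∧ G.CompleteFor A (f len) ∧
    ∀ i ≤ len, G.maxRedDeg (f i) ≤ w }

/-- `H` has a cut vertex: removing some vertex increases the number of connected
components. -/
def HasCutVertex {W : Type*} (H : SimpleGraph W) : Prop :=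
  ∃ v : W, Nat.card H.ConnectedComponent <
    Nat.card (H.induce {w | w ≠ v}).ConnectedComponent

/-- `s` spans a biconnected component (block) of `G`: a maximal nonempty connected
induced subgraph without a cut vertex. -/
def IsBlock {V : Type*} [Fintype V] (G : SimpleGraph V) (s : Finset V) : Prop :=
  s.Nonempty ∧ (G.induce (s : Set V)).Connected ∧ ¬ HasCutVertex (G.induce (s : Set V)) ∧
    ∀ t : Finset V, s ⊆ t → (G.induce (t : Set V)).Connected →
      ¬ HasCutVertex (G.induce (t : Set V)) → s = t

/-! ### Partial contraction sequences -/

/-- `F'` is reachable from `F` by merges, every family after the first having maximum red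
degree at most `k` when the fixed parts `R`, which are never merged, are added to it. -/
def Reach (G : SimpleGraph V) (k : ℕ) (R : Finset (Finset V)) :
    Finset (Finset V) → Finset (Finset V) → Prop :=
  Relation.ReflTransGen fun F F' => MergeStep F F' ∧ G.toTrigraph.maxRedDeg (F' ∪ R) ≤ k

/-- `F` is a partition of the vertex set `U` into nonempty parts. -/
structure IsPart (F : Finset (Finset V)) (U : Finset V) : Prop where
  ne : ∅ ∉ F
  disj : ∀ A ∈ F, ∀ B ∈ F, ∀ x, x ∈ A → x ∈ B → A = B
  cover : ∀ x, x ∈ U ↔ ∃ A ∈ F, x ∈ A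

theorem IsPart.merge {F F' : Finset (Finset V)} {U : Finset V} (h : IsPart F U)
    (hm : MergeStep F F') : IsPart F' U := by
  obtain ⟨A, hA, B, hB, hAB, rfl⟩ := hm
  obtain ⟨h1, h2, h3⟩ := h
  have hAne : A.Nonempty := Finset.nonempty_iff_ne_empty.2 (fun h => h1 (h ▸ hA))
  obtain ⟨a, ha⟩ := hAne
  refine ⟨?_, ?_, ?_⟩
  · intro h
    rw [Finset.mem_insert] at h
    rcases h with h | h
    · have : a ∈ A ∪ B := Finset.mem_union_left _ ha
      rw [← h] at this
      simp at this
    · exact h1 (Finset.mem_of_mem_erase (Finset.mem_of_mem_erase h))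
  · intro X hX Y hY x hx hy
    simp only [Finset.mem_insert, Finset.mem_erase] at hX hY
    grind
  · intro x
    rw [h3]
    simp only [Finset.mem_insert, Finset.mem_erase]
    constructor
    · rintro ⟨X, hX, hx⟩
      by_cases hXA : X = A
      · exact ⟨A ∪ B, Or.inl rfl, by grind⟩
      by_cases hXB : X = B
      · exact ⟨A ∪ B, Or.inl rfl, by grind⟩
      exact ⟨X, Or.inr ⟨hXB, hXA, hX⟩, hx⟩
    · rintro ⟨X, hX | hX, hx⟩
      · subst hX
        rcases Finset.mem_union.1 hx with h | h
        exacts [⟨A, hA, h⟩, ⟨B, hB, h⟩]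
      · exact ⟨X, hX.2.2, hx⟩

theorem IsPart.card_merge {F F' : Finset (Finset V)} {U : Finset V} (h : IsPart F U)
    (hm : MergeStep F F') : F.card = F'.card + 1 := by
  obtain ⟨A, hA, B, hB, hAB, rfl⟩ := hm
  obtain ⟨a, ha⟩ := Finset.nonempty_iff_ne_empty.2 (fun e => h.ne (e ▸ hA) : A ≠ ∅)
  obtain ⟨b, hb⟩ := Finset.nonempty_iff_ne_empty.2 (fun e => h.ne (e ▸ hB) : B ≠ ∅)
  have hn : A ∪ B ∉ (F.erase A).erase B := by
    intro hm
    simp only [Finset.mem_erase] at hm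
    exact hm.2.1 (h.disj _ hm.2.2 A hA a (Finset.mem_union_left _ ha) ha)
  rw [Finset.card_insert_of_notMem hn, Finset.card_erase_of_mem (by grind),
    Finset.card_erase_of_mem hA]
  have : 2 ≤ F.card := by
    rw [← Finset.card_pair hAB]
    exact Finset.card_le_card (by grind)
  omega

theorem isPart_singletons (U : Finset V) : IsPart (U.image fun v => ({v} : Finset V)) U := by
  refine ⟨by simp, ?_, ?_⟩
  · simp only [Finset.mem_image]
    rintro A ⟨a, -, rfl⟩ B ⟨b, -, rfl⟩ x
    simp only [Finset.mem_singleton]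
    rintro rfl rfl
    rfl
  · intro x
    simp

theorem isPart_discrete [Fintype V] : IsPart (discretePart V) Finset.univ :=
  isPart_singletons _

theorem Reach.isPart {G : SimpleGraph V} {k : ℕ} {R F F' : Finset (Finset V)} {U : Finset V}
    (hr : Reach G k R F F') (h : IsPart F U) : IsPart F' U := by
  induction hr with
  | refl => exact h
  | tail _ hs ih => exact ih.merge hs.1

theorem redAdj_iff (G : SimpleGraph V) (A B : Finset V) : G.toTrigraph.redAdj A B ↔
    A ≠ B ∧ (∃ a ∈ A, ∃ b ∈ B, G.Adj a b) ∧ ∃ a ∈ A, ∃ b ∈ B, ¬ G.Adj a b := by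
  simp [Trigraph.redAdj, SimpleGraph.toTrigraph]

theorem maxRedDeg_le_iff (G : SimpleGraph V) (P : Finset (Finset V)) (k : ℕ) :
    G.toTrigraph.maxRedDeg P ≤ k ↔
      ∀ A ∈ P, (P.filter fun B => G.toTrigraph.redAdj A B).card ≤ k := by
  simp [Trigraph.maxRedDeg, Trigraph.redDeg]

theorem maxRedDeg_le_of_card (G : SimpleGraph V) (P : Finset (Finset V)) (k : ℕ)
    (h : P.card ≤ k + 1) : G.toTrigraph.maxRedDeg P ≤ k := by
  rw [maxRedDeg_le_iff]
  intro A hA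
  have : (P.filter fun B => G.toTrigraph.redAdj A B) ⊆ P.erase A := by
    intro B hB
    rw [Finset.mem_filter, redAdj_iff] at hB
    exact Finset.mem_erase.2 ⟨hB.2.1.symm, hB.1⟩
  have := Finset.card_le_card this
  rw [Finset.card_erase_of_mem hA] at this
  omega

theorem maxRedDeg_discrete (G : SimpleGraph V) (U : Finset V) (k : ℕ) :
    G.toTrigraph.maxRedDeg (U.image fun v => ({v} : Finset V)) ≤ k := by
  rw [maxRedDeg_le_iff]
  intro A hA
  rw [Finset.filter_eq_empty_iff.2]
  · simp
  intro B hB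
  rw [redAdj_iff]
  simp only [Finset.mem_image] at hA hB
  obtain ⟨a, -, rfl⟩ := hA
  obtain ⟨b, -, rfl⟩ := hB
  simp only [Finset.mem_singleton, exists_eq_left]
  tauto

/-- A merge in which either set may be missing from `F` (hence empty), and in which the two
sets may coincide; it is a merge step or no step at all. -/
theorem reach_merge {G : SimpleGraph V} {k : ℕ} {R F F' : Finset (Finset V)}
    (hF : ∅ ∉ F) (hF' : ∅ ∉ F') (A B : Finset V) (hA : A = ∅ ∨ A ∈ F) (hB : B = ∅ ∨ B ∈ F)
    (h : ∀ X, X ≠ ∅ → (X ∈ F' ↔ X = A ∪ B ∨ (X ∈ F ∧ X ≠ A ∧ X ≠ B)))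
    (hw : G.toTrigraph.maxRedDeg (F' ∪ R) ≤ k) : Reach G k R F F' := by
  have key : ∀ X, X ∈ F' ↔ X ≠ ∅ ∧ (X = A ∪ B ∨ (X ∈ F ∧ X ≠ A ∧ X ≠ B)) := by
    intro X
    by_cases hX : X = ∅
    · subst hX; simp [hF']
    · simp [hX, h X hX]
  by_cases hc : A = ∅ ∨ B = ∅ ∨ A = B
  · have : F' = F := by
      ext X
      rw [key]
      have h0 : X ∈ F → X ≠ ∅ := fun h e => hF (e ▸ h)
      by_cases hX : X = ∅
      · subst hX; simp [hF]
      rcases hc with rfl | rfl | rfl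
      · simp only [Finset.empty_union]; grind
      · simp only [Finset.union_empty]; grind
      · simp only [Finset.union_idempotent]; grind
    rw [this]
    exact Relation.ReflTransGen.refl
  · push Not at hc
    obtain ⟨h1, h2, h3⟩ := hc
    have h1' : A ≠ ∅ := by simpa [Finset.nonempty_iff_ne_empty] using h1
    have h2' : B ≠ ∅ := by simpa [Finset.nonempty_iff_ne_empty] using h2
    refine Relation.ReflTransGen.single ⟨⟨A, hA.resolve_left h1', B, hB.resolve_left h2', h3, ?_⟩, hw⟩
    ext X
    rw [key]
    have h0 : X ∈ F → X ≠ ∅ := fun h e => hF (e ▸ h)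
    have h5 : A ∪ B ≠ ∅ := by
      intro e
      exact h1' (Finset.union_eq_empty.1 e).1
    simp only [Finset.mem_insert, Finset.mem_erase]
    grind

/-! ### Twin-width as reachability -/

/-- Any way of merging all parts has width at most the number of parts, so the set of widths
defining `tww` is nonempty and its infimum is attained. -/
theorem exists_reach (G : SimpleGraph V) (F : Finset (Finset V)) (U : Finset V)
    (hF : F.Nonempty) (h : IsPart F U) : Reach G F.card ∅ F {U} := by
  obtain ⟨n, hn⟩ : ∃ n, n = F.card := ⟨_, rfl⟩
  suffices H : ∀ m, ∀ F : Finset (Finset V), F.Nonempty → IsPart F U → F.card ≤ m + 1 →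
      m ≤ n → Reach G n ∅ F {U} by
    rw [← hn]
    refine H n F hF h (by omega) le_rfl
  intro m
  induction m with
  | zero =>
    intro F hF h hc _
    obtain ⟨A, rfl⟩ := Finset.card_eq_one.1 (le_antisymm hc hF.card_pos)
    have : A = U := by
      ext x; rw [h.cover]; simp
    rw [this]
    exact Relation.ReflTransGen.refl
  | succ m ih =>
    intro F hF h hc hm
    by_cases h1 : F.card ≤ m + 1
    · exact ih F hF h h1 (by omega)
    obtain ⟨A, hA, B, hB, hAB⟩ := Finset.one_lt_card.1 (by omega : 1 < F.card)
    have hs : MergeStep F (insert (A ∪ B) ((F.erase A).erase B)) := ⟨A, hA, B, hB, hAB, rfl⟩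
    have hcard := h.card_merge hs
    refine Relation.ReflTransGen.head ⟨hs, ?_⟩ (ih _ (Finset.insert_nonempty _ _) (h.merge hs)
      (by omega) (by omega))
    apply maxRedDeg_le_of_card
    rw [Finset.union_empty]
    omega

/-- Each merge reduces the number of parts by exactly one, which determines the length of the
sequence. -/
theorem Reach.seq {G : SimpleGraph V} {k : ℕ} {F F' : Finset (Finset V)} {U : Finset V}
    (hr : Reach G k ∅ F F') (h : IsPart F U) (hw : G.toTrigraph.maxRedDeg F ≤ k) :
    ∃ f : ℕ → Finset (Finset V), f 0 = F ∧ f (F.card - F'.card) = F' ∧ F'.card ≤ F.card ∧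
      (∀ i < F.card - F'.card, MergeStep (f i) (f (i + 1))) ∧
      ∀ i ≤ F.card - F'.card, G.toTrigraph.maxRedDeg (f i) ≤ k := by
  induction hr with
  | refl => exact ⟨fun _ => F, rfl, rfl, le_rfl, by simp, fun _ _ => hw⟩
  | @tail F1 F2 hr' hs ih =>
    obtain ⟨f, h0, hn, hle, hst, hwd⟩ := ih
    have hc := (Reach.isPart hr' h).card_merge hs.1
    obtain ⟨n, hn'⟩ : ∃ n, n = F.card - F1.card := ⟨_, rfl⟩
    have hn2 : F.card - F2.card = n + 1 := by omega
    rw [← hn'] at hn hst hwd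
    rw [hn2]
    refine ⟨fun i => if i ≤ n then f i else F2, by simpa using h0, by simp, by omega, ?_, ?_⟩
    · intro i hi
      by_cases h1 : i < n
      · simpa [h1.le, Nat.succ_le_of_lt h1] using hst i h1
      · have : i = n := by omega
        subst this
        simpa [hn] using hs.1
    · intro i hi
      by_cases h1 : i ≤ n
      · simpa [h1] using hwd i h1
      · simpa [h1] using hs.2

theorem card_discretePart [Fintype V] : (discretePart V).card = Fintype.card V := by
  rw [discretePart, Finset.card_image_of_injective _ (fun a b h => by simpa using h),
    Finset.card_univ]

theorem tww_le_of_reach [Fintype V] (G : SimpleGraph V) (k : ℕ)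
    (h : Reach G k ∅ (discretePart V) {Finset.univ}) : G.toTrigraph.tww ≤ k := by
  obtain ⟨f, h0, hn, _, hs, hw⟩ := h.seq isPart_discrete (maxRedDeg_discrete G _ k)
  rw [card_discretePart, Finset.card_singleton] at *
  exact Nat.sInf_le ⟨f, ⟨h0, hs⟩, hn, hw⟩

theorem reach_tww [Fintype V] [Nonempty V] (G : SimpleGraph V) (k : ℕ)
    (hk : G.toTrigraph.tww ≤ k) : Reach G k ∅ (discretePart V) {Finset.univ} := by
  have hne : (discretePart V).Nonempty := by
    rw [discretePart, Finset.image_nonempty]; exact Finset.univ_nonempty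
  obtain ⟨f, h0, hn, _, hs, hw⟩ := (exists_reach G _ _ hne isPart_discrete).seq isPart_discrete
    (maxRedDeg_discrete G _ _)
  rw [card_discretePart, Finset.card_singleton] at *
  have hmem := Nat.sInf_mem (s := { w | ∃ f : ℕ → Finset (Finset V),
    IsCSeq V (Fintype.card V - 1) f ∧
    f (Fintype.card V - 1) = {Finset.univ} ∧
    ∀ i ≤ Fintype.card V - 1, G.toTrigraph.maxRedDeg (f i) ≤ w }) ⟨_, f, ⟨h0, hs⟩, hn, hw⟩
  obtain ⟨g, ⟨g0, gs⟩, gn, gw⟩ := hmem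
  rw [← gn, ← g0]
  have : ∀ i ≤ Fintype.card V - 1, Reach G k ∅ (g 0) (g i) := by
    intro i
    induction i with
    | zero => exact fun _ => Relation.ReflTransGen.refl
    | succ i ih =>
      intro hi
      refine Relation.ReflTransGen.tail (ih (by omega)) ⟨gs i (by omega), ?_⟩
      rw [Finset.union_empty]
      exact (gw _ hi).trans hk
  exact this _ le_rfl

/-! ### Induced subgraphs -/

theorem redAdj_map {α : Type*} {H : SimpleGraph α} {G : SimpleGraph V} (e : H ↪g G)
    (A B : Finset α) : G.toTrigraph.redAdj (A.map e.toEmbedding) (B.map e.toEmbedding) ↔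
      H.toTrigraph.redAdj A B := by
  rw [redAdj_iff, redAdj_iff]
  simp

theorem Reach.push {α : Type*} {H : SimpleGraph α} {G : SimpleGraph V} (e : H ↪g G) {k : ℕ}
    {F F' : Finset (Finset α)} (h : Reach H k ∅ F F') :
    Reach G k ∅ (F.image (Finset.map e.toEmbedding)) (F'.image (Finset.map e.toEmbedding)) := by
  have hinj : Function.Injective (Finset.map e.toEmbedding) := Finset.map_injective _
  refine Relation.ReflTransGen.lift (Finset.image (Finset.map e.toEmbedding)) ?_ _ _ h
  rintro F F' ⟨⟨A, hA, B, hB, hAB, rfl⟩, hw⟩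
  refine ⟨⟨A.map e.toEmbedding, Finset.mem_image_of_mem _ hA, B.map e.toEmbedding,
    Finset.mem_image_of_mem _ hB, fun h => hAB (hinj h), ?_⟩, ?_⟩
  · rw [Finset.image_insert, Finset.map_union, Finset.image_erase hinj, Finset.image_erase hinj]
  · rw [Finset.union_empty, maxRedDeg_le_iff] at hw ⊢
    intro X hX
    obtain ⟨Y, hY, rfl⟩ := Finset.mem_image.1 hX
    rw [Finset.filter_image]
    refine Finset.card_image_le.trans ?_
    simpa only [redAdj_map] using hw Y hY

/-- The nonempty traces of the members of `F` on the domain of `e`. -/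
def traces {α : Type*} [Fintype α] (e : α → V) (F : Finset (Finset V)) : Finset (Finset α) :=
  (F.image fun X => Finset.univ.filter fun a => e a ∈ X).erase ∅

theorem mem_traces {α : Type*} [Fintype α] (e : α → V) (F : Finset (Finset V)) (X : Finset α) :
    X ∈ traces e F ↔ X ≠ ∅ ∧ ∃ Y ∈ F, (Finset.univ.filter fun a => e a ∈ Y) = X := by
  simp [traces]

theorem redAdj_of_trace {α : Type*} [Fintype α] {H : SimpleGraph α} {G : SimpleGraph V}
    (e : H ↪g G) (A B : Finset V)
    (h : H.toTrigraph.redAdj (Finset.univ.filter fun a => e a ∈ A)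
      (Finset.univ.filter fun a => e a ∈ B)) : G.toTrigraph.redAdj A B := by
  rw [redAdj_iff] at h ⊢
  obtain ⟨h1, ⟨a, ha, b, hb, hab⟩, ⟨a', ha', b', hb', hab'⟩⟩ := h
  simp only [Finset.mem_filter, Finset.mem_univ, true_and] at ha hb ha' hb'
  refine ⟨?_, ⟨e a, ha, e b, hb, by simpa using hab⟩, ⟨e a', ha', e b', hb', by simpa using hab'⟩⟩
  rintro rfl
  exact h1 rfl

/-- A merge of two parts induces on the traces a merge, or no change if one of the traces is
empty. -/
theorem Reach.pull {α : Type*} [Fintype α] {H : SimpleGraph α} {G : SimpleGraph V}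
    (e : H ↪g G) {k : ℕ} {F F' : Finset (Finset V)} {U : Finset V} (hF : IsPart F U)
    (h : Reach G k ∅ F F') : Reach H k ∅ (traces e F) (traces e F') := by
  induction h with
  | refl => exact Relation.ReflTransGen.refl
  | @tail F1 F2 hr hs ih =>
    have hP := Reach.isPart hr hF
    refine Relation.ReflTransGen.trans ih ?_
    obtain ⟨⟨A, hA, B, hB, hAB, rfl⟩, hw⟩ := hs
    set p : Finset V → Finset α := fun X => Finset.univ.filter fun a => e a ∈ X with hp
    have hpu : p (A ∪ B) = p A ∪ p B := by ext; simp [hp]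
    have hdis : ∀ X ∈ F1, ∀ Y ∈ F1, p X ≠ ∅ → p X = p Y → X = Y := by
      intro X hX Y hY hne he
      obtain ⟨a, ha⟩ := Finset.nonempty_iff_ne_empty.2 hne
      have ha' := ha
      rw [he] at ha'
      exact hP.disj X hX Y hY (e a) (by simpa [hp] using ha) (by simpa [hp] using ha')
    have hor : ∀ X ∈ F1, p X = ∅ ∨ p X ∈ traces e F1 := by
      intro X hX
      by_cases hn : p X = ∅
      · exact Or.inl hn
      · exact Or.inr ((mem_traces _ _ _).2 ⟨hn, X, hX, rfl⟩)
    refine reach_merge (by simp [traces]) (by simp [traces]) (p A) (p B)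
      (hor A hA) (hor B hB) ?_ ?_
    · intro X hX
      rw [mem_traces, mem_traces]
      constructor
      · rintro ⟨-, Y, hY, rfl⟩
        rcases Finset.mem_insert.1 hY with rfl | hY
        · exact Or.inl hpu
        · simp only [Finset.mem_erase] at hY
          exact Or.inr ⟨⟨hX, Y, hY.2.2, rfl⟩, fun h => hY.2.1 (hdis Y hY.2.2 A hA hX h),
            fun h => hY.1 (hdis Y hY.2.2 B hB hX h)⟩
      · rintro (h | ⟨⟨-, Y, hY, rfl⟩, h1, h2⟩)
        · exact ⟨hX, A ∪ B, Finset.mem_insert_self _ _, by rw [h, ← hpu]⟩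
        · refine ⟨hX, Y, ?_, rfl⟩
          simp only [Finset.mem_insert, Finset.mem_erase]
          refine Or.inr ⟨?_, ?_, hY⟩
          · rintro rfl; exact h2 rfl
          · rintro rfl; exact h1 rfl
    · rw [Finset.union_empty, maxRedDeg_le_iff] at hw ⊢
      intro X hX
      obtain ⟨-, Y, hY, rfl⟩ := (mem_traces _ _ _).1 hX
      refine le_trans (Finset.card_le_card (t := Finset.image p _) ?_) (Finset.card_image_le.trans (hw Y hY))
      intro Z hZ
      rw [Finset.mem_filter, mem_traces] at hZ
      obtain ⟨⟨-, Z', hZ', rfl⟩, hadj⟩ := hZ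
      exact Finset.mem_image.2 ⟨Z', Finset.mem_filter.2 ⟨hZ', redAdj_of_trace e _ _ hadj⟩, rfl⟩

/-- Twin-width is monotone under induced subgraphs. -/
theorem tww_mono {α : Type*} [Fintype α] [Nonempty α] [Fintype V] {H : SimpleGraph α}
    {G : SimpleGraph V} (e : H ↪g G) : H.toTrigraph.tww ≤ G.toTrigraph.tww := by
  have : Nonempty V := ⟨e (Classical.arbitrary α)⟩
  apply tww_le_of_reach
  have h := (reach_tww G _ le_rfl).pull e isPart_discrete
  convert h using 1
  · ext X
    rw [mem_traces]
    simp only [discretePart, Finset.mem_image, Finset.mem_univ, true_and, exists_exists_eq_and]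
    constructor
    · rintro ⟨a, rfl⟩
      refine ⟨by simp, e a, ?_⟩
      ext b
      simp
    · rintro ⟨hX, v, rfl⟩
      obtain ⟨a, ha⟩ := Finset.nonempty_iff_ne_empty.2 hX
      refine ⟨a, ?_⟩
      ext b
      simp only [Finset.mem_singleton, Finset.mem_filter, Finset.mem_univ, true_and] at ha ⊢
      rw [← ha]
      simp
  · ext X
    rw [mem_traces]
    simp only [Finset.mem_singleton, exists_eq_left, Finset.mem_univ, Finset.filter_true]
    constructor
    · rintro rfl
      exact ⟨Finset.univ_nonempty.ne_empty, rfl⟩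
    · exact fun h => h.2.symm

/-- A contraction sequence of an induced subgraph, read as a sequence of partitions of the
inducing vertex set. -/
theorem reach_induce (G : SimpleGraph V) (W : Finset V) (hW : W.Nonempty) (k : ℕ)
    (h : (G.induce (W : Set V)).toTrigraph.tww ≤ k) :
    Reach G k ∅ (W.image fun v => ({v} : Finset V)) {W} := by
  have : Nonempty (W : Set V) := hW.to_subtype
  have h := (reach_tww _ _ h).push (SimpleGraph.Embedding.induce (W : Set V))
  convert h using 1
  · ext X
    simp [discretePart]
  · rw [Finset.image_singleton]
    congr 1
    ext x
    simp

/-! ### Pendant parts -/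

/-- `pen w` is a (possibly empty) pendant part attached to the vertex `w` of `W`: the sets
`pen w` are disjoint from `W` and from each other, and the only edges leaving `pen w` within
the union of `W` and of all pendant parts go to `w`. -/
structure PenOK (G : SimpleGraph V) (W : Finset V) (pen : V → Finset V) : Prop where
  dW : ∀ w ∈ W, ∀ a ∈ pen w, a ∉ W
  dP : ∀ w ∈ W, ∀ w' ∈ W, ∀ a ∈ pen w, a ∈ pen w' → w = w'
  aW : ∀ w ∈ W, ∀ x ∈ W, ∀ a ∈ pen w, G.Adj a x → x = w
  aP : ∀ w ∈ W, ∀ w' ∈ W, ∀ a ∈ pen w, ∀ b ∈ pen w', G.Adj a b → w = w'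

/-- The union of the pendant parts of the vertices of `Y` other than the root `r`. -/
def pd (r : V) (pen : V → Finset V) (Y : Finset V) : Finset V := (Y.erase r).biUnion pen

theorem mem_pd {r : V} {pen : V → Finset V} {Y : Finset V} {x : V} :
    x ∈ pd r pen Y ↔ ∃ y ∈ Y, y ≠ r ∧ x ∈ pen y := by
  simp [pd]
  grind

theorem pd_union (r : V) (pen : V → Finset V) (A B : Finset V) :
    pd r pen (A ∪ B) = pd r pen A ∪ pd r pen B := by
  ext x
  simp only [Finset.mem_union, mem_pd]
  grind

/-- The parts, other than `{r}`, that arise when the vertices of `W` are partitioned by `P`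
and their pendant parts are merged along `Q`, while the root `r` and its pendant part are kept
apart from everything else. -/
def fam (r : V) (pen : V → Finset V) (P Q : Finset (Finset V)) : Finset (Finset V) :=
  (P.image (fun Y => Y.erase r) ∪ Q.image (pd r pen) ∪ {pen r}).erase ∅

theorem mem_fam {r : V} {pen : V → Finset V} {P Q : Finset (Finset V)} {X : Finset V} :
    X ∈ fam r pen P Q ↔ X ≠ ∅ ∧
      ((∃ Y ∈ P, Y.erase r = X) ∨ (∃ Y ∈ Q, pd r pen Y = X) ∨ X = pen r) := by
  simp only [fam, Finset.mem_erase, Finset.mem_union, Finset.mem_image, Finset.mem_singleton,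
    or_assoc]

theorem card_le_add_two {α : Type*} {S T : Finset α} {a b : α} {d : ℕ}
    (h : ∀ x ∈ S, x ∈ T ∨ x = a ∨ x = b) (hT : T.card ≤ d) : S.card ≤ d + 2 := by
  have h1 : S ⊆ T ∪ {a, b} := by
    intro x hx
    have := h x hx
    simp only [Finset.mem_union, Finset.mem_insert, Finset.mem_singleton]
    tauto
  have h2 := Finset.card_le_card h1
  have h3 := Finset.card_union_le T {a, b}
  have h4 := Finset.card_le_two (a := a) (b := b)
  omega

/-- The width estimate. Deleting `r` from its part costs one extra red edge, to `{r}` or (for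
`r` itself) to the rest of that part; the pendant parts cost another one, as long as every
pendant part belongs to at most two parts of `P`. -/
theorem width_fam {G : SimpleGraph V} {W : Finset V} {pen : V → Finset V} {r : V} {d : ℕ}
    {P Q : Finset (Finset V)} (hpen : PenOK G W pen) (hr : r ∈ W) (hP : IsPart P W)
    (hQ : IsPart Q W) (hPQ : ∀ Y ∈ Q, ∃ A ∈ P, ∃ B ∈ P, Y = A ∪ B)
    (hw : G.toTrigraph.maxRedDeg P ≤ d) :
    G.toTrigraph.maxRedDeg (fam r pen P Q ∪ {{r}}) ≤ d + 2 := by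
  have hPW : ∀ Y ∈ P, ∀ y ∈ Y, y ∈ W := fun Y hY y hy => (hP.cover y).2 ⟨Y, hY, hy⟩
  have hQW : ∀ Y ∈ Q, ∀ y ∈ Y, y ∈ W := fun Y hY y hy => (hQ.cover y).2 ⟨Y, hY, hy⟩
  obtain ⟨hW1, hW2, hW3, hW4⟩ := hpen
  rw [maxRedDeg_le_iff] at hw ⊢
  have hmem : ∀ X, X ∈ fam r pen P Q ∪ {{r}} ↔ X = {r} ∨ (X ≠ ∅ ∧
      ((∃ Y ∈ P, Y.erase r = X) ∨ (∃ Y ∈ Q, pd r pen Y = X) ∨ X = pen r)) := by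
    intro X
    rw [Finset.mem_union, mem_fam, Finset.mem_singleton, or_comm]
  intro Z hZ
  rcases (hmem Z).1 hZ with rfl | ⟨hZ0, ⟨X, hX, rfl⟩ | ⟨Y, hY, rfl⟩ | rfl⟩
  · obtain ⟨P0, hP0, hrP0⟩ := (hP.cover r).1 hr
    refine card_le_add_two (T := (P.filter fun B => G.toTrigraph.redAdj P0 B).image
      (fun Y => Y.erase r)) (a := P0.erase r) (b := pen r) ?_
      (Finset.card_image_le.trans (hw P0 hP0))
    intro T hT
    rw [Finset.mem_filter, hmem, redAdj_iff] at hT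
    obtain ⟨hT, hne, ⟨a, ha, b, hb, hab⟩, ⟨a', ha', b', hb', hab'⟩⟩ := hT
    rw [Finset.mem_singleton] at ha ha'
    subst ha ha'
    rcases hT with rfl | ⟨-, ⟨Y, hY, rfl⟩ | ⟨Y, hY, rfl⟩ | rfl⟩
    · exact absurd rfl hne
    · by_cases hYP : Y = P0
      · subst hYP; exact Or.inr (Or.inl rfl)
      · refine Or.inl (Finset.mem_image.2 ⟨Y, Finset.mem_filter.2 ⟨hY, ?_⟩, rfl⟩)
        rw [redAdj_iff]
        exact ⟨Ne.symm hYP, ⟨a', hrP0, b, Finset.mem_of_mem_erase hb, hab⟩,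
          ⟨a', hrP0, b', Finset.mem_of_mem_erase hb', hab'⟩⟩
    · obtain ⟨y, hy, hyr, hby⟩ := mem_pd.1 hb
      exact absurd (hW3 y (hQW Y hY y hy) a' hr b hby hab.symm) (Ne.symm hyr)
    · exact Or.inr (Or.inr rfl)
  · obtain ⟨x0, hx0⟩ := Finset.nonempty_iff_ne_empty.2 hZ0
    have hx0' := Finset.mem_of_mem_erase hx0
    obtain ⟨Y0, hY0, hxY0⟩ := (hQ.cover x0).1 (hPW X hX x0 hx0')
    have hXY0 : X ⊆ Y0 := by
      obtain ⟨A, hA, B, hB, rfl⟩ := hPQ Y0 hY0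
      rcases Finset.mem_union.1 hxY0 with h | h
      · rw [hP.disj X hX A hA x0 hx0' h]; exact Finset.subset_union_left
      · rw [hP.disj X hX B hB x0 hx0' h]; exact Finset.subset_union_right
    refine card_le_add_two (T := (P.filter fun B => G.toTrigraph.redAdj X B).image
      (fun Y => Y.erase r)) (a := {r}) (b := pd r pen Y0) ?_
      (Finset.card_image_le.trans (hw X hX))
    intro T hT
    rw [Finset.mem_filter, hmem, redAdj_iff] at hT
    obtain ⟨hT, hne, ⟨a, ha, b, hb, hab⟩, ⟨a', ha', b', hb', hab'⟩⟩ := hT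
    rw [Finset.mem_erase] at ha ha'
    rcases hT with rfl | ⟨-, ⟨Y, hY, rfl⟩ | ⟨Y, hY, rfl⟩ | rfl⟩
    · exact Or.inr (Or.inl rfl)
    · refine Or.inl (Finset.mem_image.2 ⟨Y, Finset.mem_filter.2 ⟨hY, ?_⟩, rfl⟩)
      rw [redAdj_iff]
      refine ⟨?_, ⟨a, ha.2, b, Finset.mem_of_mem_erase hb, hab⟩,
          ⟨a', ha'.2, b', Finset.mem_of_mem_erase hb', hab'⟩⟩
      rintro rfl
      exact hne rfl
    · obtain ⟨y, hy, hyr, hby⟩ := mem_pd.1 hb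
      have := hW3 y (hQW Y hY y hy) a (hPW X hX a ha.2) b hby hab.symm
      subst this
      rw [hQ.disj Y hY Y0 hY0 a hy (hXY0 ha.2)]
      exact Or.inr (Or.inr rfl)
    · exact absurd (hW3 r hr a (hPW X hX a ha.2) b hb hab.symm) ha.1
  · obtain ⟨A, hA, B, hB, rfl⟩ := hPQ Y hY
    refine card_le_add_two (T := ∅) (a := A.erase r) (b := B.erase r) ?_ (by simp)
    intro T hT
    rw [Finset.mem_filter, hmem, redAdj_iff] at hT
    obtain ⟨hT, hne, ⟨a, ha, b, hb, hab⟩, -⟩ := hT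
    obtain ⟨y, hy, hyr, hay⟩ := mem_pd.1 ha
    have hyW := hQW _ hY y hy
    rcases hT with rfl | ⟨-, ⟨Y', hY', rfl⟩ | ⟨Y', hY', rfl⟩ | rfl⟩
    · rw [Finset.mem_singleton] at hb
      subst hb
      exact absurd (hW3 y hyW b hr a hay hab) (Ne.symm hyr)
    · have hb' := Finset.mem_of_mem_erase hb
      have := hW3 y hyW b (hPW Y' hY' b hb') a hay hab
      subst this
      rcases Finset.mem_union.1 hy with h | h
      · rw [hP.disj Y' hY' A hA b hb' h]; exact Or.inr (Or.inl rfl)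
      · rw [hP.disj Y' hY' B hB b hb' h]; exact Or.inr (Or.inr rfl)
    · obtain ⟨y', hy', hyr', hby⟩ := mem_pd.1 hb
      have := hW4 y hyW y' (hQW _ hY' y' hy') a hay b hby hab
      subst this
      rw [hQ.disj _ hY' _ hY y hy' hy] at hne
      exact absurd rfl hne
    · exact absurd (hW4 y hyW r hr a hay b hb hab) hyr
  · refine card_le_add_two (T := ∅) (a := {r}) (b := {r}) ?_ (by simp)
    intro T hT
    rw [Finset.mem_filter, hmem, redAdj_iff] at hT
    obtain ⟨hT, hne, ⟨a, ha, b, hb, hab⟩, -⟩ := hT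
    rcases hT with rfl | ⟨-, ⟨Y', hY', rfl⟩ | ⟨Y', hY', rfl⟩ | rfl⟩
    · exact Or.inr (Or.inl rfl)
    · have hb' := Finset.mem_erase.1 hb
      exact absurd (hW3 r hr b (hPW Y' hY' b hb'.2) a ha hab) hb'.1
    · obtain ⟨y', hy', hyr', hby⟩ := mem_pd.1 hb
      exact absurd (hW4 r hr y' (hQW _ hY' y' hy') a ha b hby hab) (Ne.symm hyr')
    · exact absurd rfl hne

/-- One merge of `P` is followed by merging the two pendant parts and then the two parts. -/
theorem reach_fam_merge {G : SimpleGraph V} {W : Finset V} {pen : V → Finset V} {r : V} {d : ℕ}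
    {P P' : Finset (Finset V)} (hpen : PenOK G W pen) (hr : r ∈ W) (hP : IsPart P W)
    (hm : MergeStep P P') (hw : G.toTrigraph.maxRedDeg P ≤ d)
    (hw' : G.toTrigraph.maxRedDeg P' ≤ d) :
    Reach G (d + 2) {{r}} (fam r pen P P) (fam r pen P' P') := by
  have hP' := hP.merge hm
  have h1 := width_fam hpen hr hP hP' (d := d) (by
    obtain ⟨A, hA, B, hB, hAB, rfl⟩ := hm
    intro Y hY
    rcases Finset.mem_insert.1 hY with rfl | hY
    · exact ⟨A, hA, B, hB, rfl⟩
    · have := Finset.mem_of_mem_erase (Finset.mem_of_mem_erase hY)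
      exact ⟨Y, this, Y, this, by simp⟩) hw
  have h2 := width_fam hpen hr hP' hP' (d := d) (fun Y hY => ⟨Y, hY, Y, hY, by simp⟩) hw'
  obtain ⟨A, hA, B, hB, hAB, rfl⟩ := hm
  set P' := insert (A ∪ B) ((P.erase A).erase B) with hPdef
  have hmemP : ∀ Y, Y ∈ P' ↔ Y = A ∪ B ∨ (Y ≠ B ∧ Y ≠ A ∧ Y ∈ P) := by
    intro Y; simp [hPdef]
  have hPW : ∀ Y ∈ P, ∀ y ∈ Y, y ∈ W := fun Y hY y hy => (hP.cover y).2 ⟨Y, hY, hy⟩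
  have hPW' : ∀ Y ∈ P', ∀ y ∈ Y, y ∈ W := fun Y hY y hy => (hP'.cover y).2 ⟨Y, hY, hy⟩
  have e0 : ∀ P Q, ∅ ∉ fam r pen P Q := by intro P Q; simp [fam]
  -- Distinct nonempty parts of these families are distinguished by any of their elements.
  have mm : ∀ Y ∈ P, ∀ Y' ∈ P, Y.erase r ≠ ∅ → Y.erase r = Y'.erase r → Y = Y' := by
    intro Y hY Y' hY' hne he
    obtain ⟨x, hx⟩ := Finset.nonempty_iff_ne_empty.2 hne
    exact hP.disj Y hY Y' hY' x (Finset.mem_of_mem_erase hx)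
      (Finset.mem_of_mem_erase (he ▸ hx))
  have mp : ∀ Y ∈ P, ∀ Y' ∈ P', Y.erase r ≠ ∅ → Y.erase r ≠ pd r pen Y' := by
    intro Y hY Y' hY' hne he
    obtain ⟨x, hx⟩ := Finset.nonempty_iff_ne_empty.2 hne
    obtain ⟨y, hy, -, hxy⟩ := mem_pd.1 (he ▸ hx)
    exact hpen.dW y (hPW' Y' hY' y hy) x hxy (hPW Y hY x (Finset.mem_of_mem_erase hx))
  have mp' : ∀ Y ∈ P, ∀ Y' ∈ P, Y.erase r ≠ ∅ → Y.erase r ≠ pd r pen Y' := by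
    intro Y hY Y' hY' hne he
    obtain ⟨x, hx⟩ := Finset.nonempty_iff_ne_empty.2 hne
    obtain ⟨y, hy, -, hxy⟩ := mem_pd.1 (he ▸ hx)
    exact hpen.dW y (hPW Y' hY' y hy) x hxy (hPW Y hY x (Finset.mem_of_mem_erase hx))
  have pp : ∀ Y ∈ P, ∀ Y' ∈ P, pd r pen Y ≠ ∅ → pd r pen Y = pd r pen Y' → Y = Y' := by
    intro Y hY Y' hY' hne he
    obtain ⟨x, hx⟩ := Finset.nonempty_iff_ne_empty.2 hne
    obtain ⟨y, hy, -, hxy⟩ := mem_pd.1 hx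
    obtain ⟨y', hy', -, hxy'⟩ := mem_pd.1 (he ▸ hx)
    have := hpen.dP y (hPW Y hY y hy) y' (hPW Y' hY' y' hy') x hxy hxy'
    subst this
    exact hP.disj Y hY Y' hY' y hy hy'
  have rm : ∀ Y ∈ P, Y.erase r ≠ ∅ → Y.erase r ≠ pen r := by
    intro Y hY hne he
    obtain ⟨x, hx⟩ := Finset.nonempty_iff_ne_empty.2 hne
    exact hpen.dW r hr x (he ▸ hx) (hPW Y hY x (Finset.mem_of_mem_erase hx))
  have rp : ∀ Y ∈ P, pd r pen Y ≠ ∅ → pd r pen Y ≠ pen r := by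
    intro Y hY hne he
    obtain ⟨x, hx⟩ := Finset.nonempty_iff_ne_empty.2 hne
    obtain ⟨y, hy, hyr, hxy⟩ := mem_pd.1 hx
    exact hyr (hpen.dP y (hPW Y hY y hy) r hr x hxy (he ▸ hx))
  refine Relation.ReflTransGen.trans (b := fam r pen P P') ?_ ?_
  · refine reach_merge (e0 _ _) (e0 _ _) (pd r pen A) (pd r pen B) ?_ ?_ ?_ h1
    · rw [mem_fam]; by_cases h : pd r pen A = ∅ <;> grind
    · rw [mem_fam]; by_cases h : pd r pen B = ∅ <;> grind
    · intro X hX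
      rw [mem_fam, mem_fam]
      have := pd_union r pen A B
      constructor
      · rintro ⟨-, ⟨Y, hY, rfl⟩ | ⟨Y, hY, rfl⟩ | rfl⟩
        · exact Or.inr ⟨⟨hX, Or.inl ⟨Y, hY, rfl⟩⟩, mp' Y hY A hA hX, mp' Y hY B hB hX⟩
        · rcases (hmemP Y).1 hY with rfl | ⟨h1, h2, h3⟩
          · exact Or.inl this
          · exact Or.inr ⟨⟨hX, Or.inr (Or.inl ⟨Y, h3, rfl⟩)⟩, fun h => h2 (pp Y h3 A hA hX h),
              fun h => h1 (pp Y h3 B hB hX h)⟩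
        · exact Or.inr ⟨⟨hX, Or.inr (Or.inr rfl)⟩, fun h => rp A hA (h ▸ hX) h.symm,
            fun h => rp B hB (h ▸ hX) h.symm⟩
      · rintro (h | ⟨⟨-, ⟨Y, hY, rfl⟩ | ⟨Y, hY, rfl⟩ | rfl⟩, h1, h2⟩)
        · exact ⟨hX, Or.inr (Or.inl ⟨A ∪ B, by simp [hmemP], by rw [h, this]⟩)⟩
        · exact ⟨hX, Or.inl ⟨Y, hY, rfl⟩⟩
        · refine ⟨hX, Or.inr (Or.inl ⟨Y, (hmemP Y).2 (Or.inr ⟨?_, ?_, hY⟩), rfl⟩)⟩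
          · rintro rfl; exact h2 rfl
          · rintro rfl; exact h1 rfl
        · exact ⟨hX, Or.inr (Or.inr rfl)⟩
  · have hu := Finset.erase_union_distrib A B r
    refine reach_merge (e0 _ _) (e0 _ _) (A.erase r) (B.erase r) ?_ ?_ ?_ h2
    · rw [mem_fam]; by_cases h : A.erase r = ∅ <;> grind
    · rw [mem_fam]; by_cases h : B.erase r = ∅ <;> grind
    · intro X hX
      rw [mem_fam, mem_fam]
      constructor
      · rintro ⟨-, ⟨Y, hY, rfl⟩ | ⟨Y, hY, rfl⟩ | rfl⟩
        · rcases (hmemP Y).1 hY with rfl | ⟨h1, h2, h3⟩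
          · exact Or.inl hu
          · exact Or.inr ⟨⟨hX, Or.inl ⟨Y, h3, rfl⟩⟩, fun h => h2 (mm Y h3 A hA hX h),
              fun h => h1 (mm Y h3 B hB hX h)⟩
        · exact Or.inr ⟨⟨hX, Or.inr (Or.inl ⟨Y, hY, rfl⟩)⟩,
            fun h => mp A hA Y hY (h ▸ hX) h.symm, fun h => mp B hB Y hY (h ▸ hX) h.symm⟩
        · exact Or.inr ⟨⟨hX, Or.inr (Or.inr rfl)⟩, fun h => rm A hA (h ▸ hX) h.symm,
            fun h => rm B hB (h ▸ hX) h.symm⟩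
      · rintro (h | ⟨⟨-, ⟨Y, hY, rfl⟩ | ⟨Y, hY, rfl⟩ | rfl⟩, h1, h2⟩)
        · exact ⟨hX, Or.inl ⟨A ∪ B, by simp [hmemP], by rw [h, hu]⟩⟩
        · refine ⟨hX, Or.inl ⟨Y, (hmemP Y).2 (Or.inr ⟨?_, ?_, hY⟩), rfl⟩⟩
          · rintro rfl; exact h2 rfl
          · rintro rfl; exact h1 rfl
        · exact ⟨hX, Or.inr (Or.inl ⟨Y, hY, rfl⟩)⟩
        · exact ⟨hX, Or.inr (Or.inr rfl)⟩

/-- A whole contraction sequence of `G[W]` is followed by one of the families `fam`. -/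
theorem reach_fam {G : SimpleGraph V} {W : Finset V} {pen : V → Finset V} {r : V} {d : ℕ}
    {P P' : Finset (Finset V)} (hpen : PenOK G W pen) (hr : r ∈ W) (hP : IsPart P W)
    (hw : G.toTrigraph.maxRedDeg P ≤ d) (h : Reach G d ∅ P P') :
    G.toTrigraph.maxRedDeg P' ≤ d ∧ Reach G (d + 2) {{r}} (fam r pen P P) (fam r pen P' P') := by
  induction h with
  | refl => exact ⟨hw, Relation.ReflTransGen.refl⟩
  | @tail F1 F2 hr' hs ih =>
    have h2 : G.toTrigraph.maxRedDeg F2 ≤ d := by simpa using hs.2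
    exact ⟨h2, ih.2.trans (reach_fam_merge hpen hr (Reach.isPart hr' hP) hs.1 ih.1 h2)⟩

/-- All vertices and pendant parts of `W`, except the root itself. -/
def rest (r : V) (pen : V → Finset V) (W : Finset V) : Finset V :=
  W.erase r ∪ W.biUnion pen

/-- The case of the induction in which `G[W]` itself has a contraction sequence of width `d`:
the sequence is followed until three parts besides `{r}` are left, namely `W` without `r`, the
merged pendant parts, and the pendant part of `r`. -/
theorem reach_base {G : SimpleGraph V} {W : Finset V} {pen : V → Finset V} {r : V} {d : ℕ}
    (hpen : PenOK G W pen) (hr : r ∈ W)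
    (h : Reach G d ∅ (W.image fun v => ({v} : Finset V)) {W}) :
    Reach G (d + 2) {{r}} (fam r pen (W.image fun v => ({v} : Finset V))
      (W.image fun v => ({v} : Finset V))) ({rest r pen W} \ {∅}) := by
  refine Relation.ReflTransGen.trans (reach_fam hpen hr (isPart_singletons W)
    (maxRedDeg_discrete G W d) h).2 ?_
  set A := W.erase r with hA
  set B := pd r pen W with hB
  set C := pen r with hC
  have hrest : rest r pen W = A ∪ B ∪ C := by
    ext x
    simp only [rest, hA, hB, hC, Finset.mem_union, mem_pd, Finset.mem_biUnion]
    grind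
  have hAC : A ≠ ∅ → A ≠ C := by
    intro hne he
    obtain ⟨x, hx⟩ := Finset.nonempty_iff_ne_empty.2 hne
    exact hpen.dW r hr x (he ▸ hx : x ∈ C) (Finset.mem_of_mem_erase hx)
  have hBC : B ≠ ∅ → B ≠ C := by
    intro hne he
    obtain ⟨x, hx⟩ := Finset.nonempty_iff_ne_empty.2 hne
    obtain ⟨y, hy, hyr, hxy⟩ := mem_pd.1 hx
    exact hyr (hpen.dP y hy r hr x hxy (he ▸ hx : x ∈ C))
  have hmem : ∀ X, X ∈ fam r pen {W} {W} ↔ X ≠ ∅ ∧ (X = A ∨ X = B ∨ X = C) := by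
    intro X
    rw [mem_fam]
    simp only [Finset.mem_singleton, exists_eq_left]
    grind
  have hcard : ∀ S : Finset (Finset V), S.card ≤ 2 → (S \ {∅} ∪ {{r}}).card ≤ d + 2 + 1 := by
    intro S hS
    have h1 := Finset.card_union_le (S \ {∅}) {{r}}
    have h2 := Finset.card_le_card (Finset.sdiff_subset : S \ {∅} ⊆ S)
    rw [Finset.card_singleton] at h1
    omega
  refine Relation.ReflTransGen.trans (b := ({A ∪ B, C} : Finset (Finset V)) \ {∅}) ?_ ?_
  · refine reach_merge ?_ (by simp) A B ?_ ?_ ?_ ?_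
    · simp [hmem]
    · rw [hmem]; tauto
    · rw [hmem]; tauto
    · intro X hX
      rw [hmem]
      simp only [Finset.mem_sdiff, Finset.mem_insert, Finset.mem_singleton]
      grind
    · exact maxRedDeg_le_of_card _ _ _ (hcard _ Finset.card_le_two)
  · rw [hrest]
    refine reach_merge (by simp) (by simp) (A ∪ B) C ?_ ?_ ?_ ?_
    · simp; tauto
    · simp; tauto
    · intro X hX
      simp only [Finset.mem_sdiff, Finset.mem_insert, Finset.mem_singleton]
      grind
    · exact maxRedDeg_le_of_card _ _ _ (hcard _ (by simp))

/-! ### Splitting at a cut vertex -/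

/-- A chain of merges relative to the root `c` takes place in a larger family whose additional
parts `R ∪ S` are adjacent to the merged ones only through `{c}`. -/
theorem Reach.frame {G : SimpleGraph V} {k : ℕ} {c : V} {R S E E' : Finset (Finset V)}
    {U : Finset V} (h : Reach G k {{c}} E E') (hE : IsPart E U)
    (hdis : ∀ Y ∈ R, ∀ x ∈ Y, x ∉ U)
    (hadj : ∀ Y ∈ R ∪ S, Y ≠ {c} → ∀ x ∈ Y, ∀ u ∈ U, ¬ G.Adj x u)
    (hcR : ∀ Y ∈ R ∪ S, ¬ G.toTrigraph.redAdj {c} Y)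
    (hw : G.toTrigraph.maxRedDeg (R ∪ S) ≤ k) :
    Reach G k S (E ∪ R) (E' ∪ R) := by
  induction h with
  | refl => exact Relation.ReflTransGen.refl
  | @tail F1 F2 hr' hs ih =>
    have hF1 := Reach.isPart hr' hE
    have hF2 := hF1.merge hs.1
    refine Relation.ReflTransGen.tail ih ⟨?_, ?_⟩
    · obtain ⟨A, hA, B, hB, hAB, rfl⟩ := hs.1
      refine ⟨A, Finset.mem_union_left _ hA, B, Finset.mem_union_left _ hB, hAB, ?_⟩
      have hnR : ∀ X ∈ F1, X ∉ R := by
        intro X hX hXR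
        obtain ⟨x, hx⟩ := Finset.nonempty_iff_ne_empty.2 (fun e => hF1.ne (e ▸ hX) : X ≠ ∅)
        exact hdis X hXR x hx ((hF1.cover x).2 ⟨X, hX, hx⟩)
      have h1 := hnR A hA
      have h2 := hnR B hB
      ext X
      simp only [Finset.mem_union, Finset.mem_insert, Finset.mem_erase]
      grind
    · rw [Finset.union_assoc, maxRedDeg_le_iff]
      have hw2 := hs.2
      rw [maxRedDeg_le_iff] at hw hw2
      have hno : ∀ X ∈ F2, ∀ Y ∈ R ∪ S, Y ≠ {c} →
          ¬ G.toTrigraph.redAdj X Y ∧ ¬ G.toTrigraph.redAdj Y X := by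
        intro X hX Y hY hne
        rw [redAdj_iff, redAdj_iff]
        constructor
        · rintro ⟨-, ⟨a, ha, b, hb, hab⟩, -⟩
          exact hadj Y hY hne b hb a ((hF2.cover a).2 ⟨X, hX, ha⟩) hab.symm
        · rintro ⟨-, ⟨a, ha, b, hb, hab⟩, -⟩
          exact hadj Y hY hne a ha b ((hF2.cover b).2 ⟨X, hX, hb⟩) hab
      intro A hA
      by_cases hAc : A ∈ F2 ∪ {{c}}
      · refine (Finset.card_le_card ?_).trans (hw2 A hAc)
        intro B hB
        rw [Finset.mem_filter] at hB ⊢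
        refine ⟨?_, hB.2⟩
        rcases Finset.mem_union.1 hB.1 with h | h
        · exact Finset.mem_union_left _ h
        · by_cases hBc : B = {c}
          · simp [hBc]
          rcases Finset.mem_union.1 hAc with h' | h'
          · exact absurd hB.2 (hno A h' B h hBc).1
          · rw [Finset.mem_singleton] at h'
            subst h'
            exact absurd hB.2 (hcR B h)
      · have hA' : A ∈ R ∪ S := by grind
        refine (Finset.card_le_card ?_).trans (hw A hA')
        intro B hB
        rw [Finset.mem_filter] at hB ⊢
        refine ⟨?_, hB.2⟩
        rcases Finset.mem_union.1 hB.1 with h | h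
        · exact absurd hB.2 (hno B h A hA' (by grind)).2
        · exact h

/-- The parts from which the contraction of `W` onto `r` starts: the vertices of `W` other than
`r` as singletons, and all pendant parts. -/
def start (r : V) (pen : V → Finset V) (W : Finset V) : Finset (Finset V) :=
  fam r pen (W.image fun v => ({v} : Finset V)) (W.image fun v => ({v} : Finset V))

theorem mem_start {W : Finset V} {pen : V → Finset V} {r : V} (hr : r ∈ W) (X : Finset V) :
    X ∈ start r pen W ↔
      X ≠ ∅ ∧ ((∃ w ∈ W, w ≠ r ∧ X = {w}) ∨ (∃ w ∈ W, X = pen w)) := by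
  rw [start, mem_fam]
  refine and_congr_right fun hX => ?_
  simp only [Finset.mem_image, exists_exists_and_eq_and]
  have h1 : ∀ w, w ≠ r → ({w} : Finset V).erase r = {w} := by
    intro w hw; ext; simp; grind
  have h2 : ({r} : Finset V).erase r = ∅ := by simp
  have h3 : ∀ w, w ≠ r → pd r pen {w} = pen w := by
    intro w hw; simp [pd, h1 w hw]
  have h4 : pd r pen {r} = ∅ := by simp [pd]
  grind

theorem mem_rest {W : Finset V} {pen : V → Finset V} {r : V} (x : V) :
    x ∈ rest r pen W ↔ (x ∈ W ∧ x ≠ r) ∨ ∃ w ∈ W, x ∈ pen w := by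
  simp [rest]
  grind

theorem start_isPart {G : SimpleGraph V} {W : Finset V} {pen : V → Finset V} {r : V}
    (hpen : PenOK G W pen) (hr : r ∈ W) : IsPart (start r pen W) (rest r pen W) := by
  refine ⟨by simp [mem_start hr], ?_, ?_⟩
  · intro A hA B hB x hxA hxB
    rw [mem_start hr] at hA hB
    have h1 := hpen.dW
    have h2 := hpen.dP
    rcases hA.2 with ⟨w, hw, hwr, rfl⟩ | ⟨w, hw, rfl⟩ <;>
      rcases hB.2 with ⟨w', hw', hwr', rfl⟩ | ⟨w', hw', rfl⟩
    · grind
    · grind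
    · grind
    · rw [h2 w hw w' hw' x hxA hxB]
  · intro x
    rw [mem_rest]
    constructor
    · rintro (⟨h1, h2⟩ | ⟨w, hw, hx⟩)
      · exact ⟨{x}, (mem_start hr _).2 ⟨by simp, Or.inl ⟨x, h1, h2, rfl⟩⟩, by simp⟩
      · exact ⟨pen w, (mem_start hr _).2 ⟨Finset.ne_empty_of_mem hx, Or.inr ⟨w, hw, rfl⟩⟩, hx⟩
    · rintro ⟨A, hA, hx⟩
      rcases ((mem_start hr _).1 hA).2 with ⟨w, hw, hwr, rfl⟩ | ⟨w, hw, rfl⟩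
      · rw [Finset.mem_singleton] at hx
        subst hx
        exact Or.inl ⟨hw, hwr⟩
      · exact Or.inr ⟨w, hw, hx⟩

/-- A cut vertex `c` splits `W` into two proper subsets that overlap in `c` only and are otherwise
nonadjacent; `W₁` is chosen to be a component of `W` without `c`, together with `c`, that contains
the prescribed vertex `r`. -/
theorem exists_split {G : SimpleGraph V} {W : Finset V} {r : V} (hr : r ∈ W)
    (hcut : HasCutVertex (G.induce (W : Set V))) :
    ∃ c W₁ W₂, W₁ ∪ W₂ = W ∧ W₁ ∩ W₂ = {c} ∧ r ∈ W₁ ∧ W₁ ≠ W ∧ W₂ ≠ W ∧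
      (∀ x ∈ W₁, ∀ y ∈ W₂, x ≠ c → y ≠ c → ¬ G.Adj x y) := by
  obtain ⟨c, hc⟩ := hcut
  set H := (G.induce (W : Set V)).induce {w | w ≠ c} with hH
  have hnot : ¬ H.Preconnected := by
    intro hp
    have h1 : Subsingleton H.ConnectedComponent := hp.subsingleton_connectedComponent
    have h2 : Nat.card H.ConnectedComponent ≤ 1 := Finite.card_le_one_iff_subsingleton.2 h1
    have : Nonempty (G.induce (W : Set V)).ConnectedComponent :=
      ⟨SimpleGraph.connectedComponentMk _ c⟩
    have h3 : 0 < Nat.card (G.induce (W : Set V)).ConnectedComponent := Nat.card_pos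
    omega
  obtain ⟨x, y, hxy⟩ : ∃ x y, ¬ H.Reachable x y := by
    simpa [SimpleGraph.Preconnected] using hnot
  obtain ⟨x₀, z, hz, hx₀⟩ : ∃ x₀ z, ¬ H.Reachable x₀ z ∧ (r = c ∨ (x₀ : V) = r) := by
    by_cases hrc : r = c
    · exact ⟨x, y, hxy, Or.inl hrc⟩
    · let r' : {w : (W : Set V) | w ≠ c} := ⟨⟨r, hr⟩, fun h => hrc (congrArg Subtype.val h)⟩
      by_cases h1 : H.Reachable r' x
      · exact ⟨r', y, fun h2 => hxy (h1.symm.trans h2), Or.inr rfl⟩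
      · exact ⟨r', x, h1, Or.inr rfl⟩
  -- the component of `x₀` after deleting the cut vertex
  let K : Finset V := W.filter fun v => ∃ v' : {w : (W : Set V) | w ≠ c},
    ((v' : (W : Set V)) : V) = v ∧ H.Reachable x₀ v'
  have hcW : (c : V) ∈ W := c.2
  have hKW : K ⊆ W := Finset.filter_subset _ _
  have hcK : (c : V) ∉ K := by
    intro h
    obtain ⟨v', hv, -⟩ := (Finset.mem_filter.1 h).2
    exact v'.2 (Subtype.ext hv)
  have hzK : ((z : (W : Set V)) : V) ∉ K := by
    intro h
    obtain ⟨v', hv, hre⟩ := (Finset.mem_filter.1 h).2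
    have : v' = z := Subtype.ext (Subtype.ext hv)
    exact hz (this ▸ hre)
  have hx₀K : ((x₀ : (W : Set V)) : V) ∈ K :=
    Finset.mem_filter.2 ⟨x₀.1.2, x₀, rfl, SimpleGraph.Reachable.refl _⟩
  have hzc : ((z : (W : Set V)) : V) ≠ c := fun h => z.2 (Subtype.ext h)
  refine ⟨c, insert (c : V) K, W \ K, ?_, ?_, ?_, ?_, ?_, ?_⟩
  · grind
  · grind
  · grind
  · intro h
    have : ((z : (W : Set V)) : V) ∈ W := z.1.2
    have h' := (Finset.ext_iff.1 h _).2 this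
    grind
  · grind
  · intro a ha b hb hac hbc hab
    have ha' : a ∈ K := by grind
    obtain ⟨v', rfl, hre⟩ := (Finset.mem_filter.1 ha').2
    rw [Finset.mem_sdiff] at hb
    let b' : {w : (W : Set V) | w ≠ c} := ⟨⟨b, hb.1⟩, fun h => hbc (congrArg Subtype.val h)⟩
    have hadj : H.Adj v' b' := hab
    exact hb.2 (Finset.mem_filter.2 ⟨hb.1, b', rfl, hre.trans hadj.reachable⟩)

/-- Retracting `W₂` to `c` shows that `W₁` inherits connectedness from `W₁ ∪ W₂`. -/
theorem connected_part {G : SimpleGraph V} {W W₁ W₂ : Finset V} {c : V} (hU : W₁ ∪ W₂ = W)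
    (hI : W₁ ∩ W₂ = {c})
    (hno : ∀ x ∈ W₁, ∀ y ∈ W₂, x ≠ c → y ≠ c → ¬ G.Adj x y)
    (hW : (G.induce (W : Set V)).Connected) : (G.induce (W₁ : Set V)).Connected := by
  have hc : c ∈ W₁ := (Finset.mem_inter.1 (hI ▸ Finset.mem_singleton_self c : c ∈ W₁ ∩ W₂)).1
  let p : V → (W₁ : Set V) := fun v => if h : v ∈ W₁ then ⟨v, h⟩ else ⟨c, hc⟩
  have key : ∀ u v : (W : Set V), (G.induce (W : Set V)).Reachable u v →
      (G.induce (W₁ : Set V)).Reachable (p u) (p v) := by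
    rintro u v ⟨w⟩
    induction w with
    | nil => exact SimpleGraph.Reachable.refl _
    | @cons a b e hab _ ih =>
      refine SimpleGraph.Reachable.trans ?_ ih
      have hab' : G.Adj a b := hab
      have haW : (a : V) ∈ W := a.2
      have hbW : (b : V) ∈ W := b.2
      by_cases h1 : (a : V) ∈ W₁ <;> by_cases h2 : (b : V) ∈ W₁
      · have : (G.induce (W₁ : Set V)).Adj (p a) (p b) := by simp [p, h1, h2, hab']
        exact this.reachable
      · have : (a : V) = c := by
          by_contra hne
          exact hno a h1 b (by grind) hne (fun h => h2 (h ▸ hc)) hab'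
        have : p a = p b := by simp [p, h2, this]
        rw [this]
      · have : (b : V) = c := by
          by_contra hne
          exact hno b h2 a (by grind) hne (fun h => h1 (h ▸ hc)) hab'.symm
        have : p a = p b := by simp [p, h1, this]
        rw [this]
      · have : p a = p b := by simp [p, h1, h2]
        rw [this]
  have : Nonempty (W₁ : Set V) := ⟨⟨c, hc⟩⟩
  refine ⟨fun u v => ?_⟩
  have huW : (u : V) ∈ W := by have : (u : V) ∈ W₁ := u.2; grind
  have hvW : (v : V) ∈ W := by have : (v : V) ∈ W₁ := v.2; grind
  have := key ⟨u, huW⟩ ⟨v, hvW⟩ (hW.preconnected _ _)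
  have hu : p u = u := by
    have : (u : V) ∈ W₁ := u.2
    simp [p, this]
  have hv : p v = v := by
    have : (v : V) ∈ W₁ := v.2
    simp [p, this]
  rwa [hu, hv] at this

/-- The statement proved by induction on `W`: the whole of `W`, with its pendant parts, contracts
to a single pendant part of the root `r`. If `W` has a cut vertex `c`, the side of `c` that avoids
`r` is first contracted to a new pendant part of `c`. -/
theorem reach_main {G : SimpleGraph V} {d : ℕ}
    (hd : ∀ s : Finset V, s.Nonempty → (G.induce (s : Set V)).Connected →
      ¬ HasCutVertex (G.induce (s : Set V)) → (G.induce (s : Set V)).toTrigraph.tww ≤ d)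
    (n : ℕ) : ∀ (W : Finset V) (pen : V → Finset V) (r : V), W.card ≤ n → r ∈ W →
      PenOK G W pen → (G.induce (W : Set V)).Connected →
      Reach G (d + 2) {{r}} (start r pen W) ({rest r pen W} \ {∅}) := by
  induction n with
  | zero =>
    intro W pen r hn hr
    exact absurd hr (by simp [Finset.card_eq_zero.1 (Nat.le_zero.1 hn)])
  | succ n ih =>
    intro W pen r hn hr hpen hW
    by_cases hcut : HasCutVertex (G.induce (W : Set V))
    swap
    · exact reach_base hpen hr (reach_induce G W ⟨r, hr⟩ d (hd W ⟨r, hr⟩ hW hcut))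
    obtain ⟨c, W₁, W₂, hU, hI, hr₁, hne₁, hne₂, hno⟩ := exists_split hr hcut
    have hU' : ∀ x, x ∈ W ↔ x ∈ W₁ ∨ x ∈ W₂ := fun x => by rw [← hU, Finset.mem_union]
    have hI' : ∀ x, x ∈ W₁ → x ∈ W₂ → x = c := fun x h1 h2 => by
      have : x ∈ W₁ ∩ W₂ := Finset.mem_inter.2 ⟨h1, h2⟩
      rwa [hI, Finset.mem_singleton] at this
    have hc : c ∈ W₁ ∩ W₂ := by rw [hI]; simp
    obtain ⟨hc₁, hc₂⟩ := Finset.mem_inter.1 hc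
    have hs₁ : W₁ ⊂ W := Finset.ssubset_iff_subset_ne.2 ⟨hU ▸ Finset.subset_union_left, hne₁⟩
    have hs₂ : W₂ ⊂ W := Finset.ssubset_iff_subset_ne.2 ⟨hU ▸ Finset.subset_union_right, hne₂⟩
    have hcard₁ := Finset.card_lt_card hs₁
    have hcard₂ := Finset.card_lt_card hs₂
    have hW₁ := connected_part hU hI hno hW
    have hW₂ := connected_part (W₁ := W₂) (W₂ := W₁) (by rw [Finset.union_comm, hU])
      (by rw [Finset.inter_comm, hI]) (fun x hx y hy h1 h2 h => hno y hy x hx h2 h1 h.symm) hW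
    obtain ⟨p1, p2, p3, p4⟩ := hpen
    have hpen₂ : PenOK G W₂ pen :=
      ⟨by grind, by grind, by grind, by grind⟩
    set D := rest c pen W₂ with hD
    have hDmem : ∀ x, x ∈ D ↔ (x ∈ W₂ ∧ x ≠ c) ∨ ∃ w ∈ W₂, x ∈ pen w := fun x => mem_rest x
    set pen' : V → Finset V := fun v => if v = c then D else pen v with hpen'
    have hpc : pen' c = D := by simp [hpen']
    have hpn : ∀ v, v ≠ c → pen' v = pen v := by intro v hv; simp [hpen', hv]
    -- `D` is separated from everything on the other side of `c`.
    have hD1 : ∀ a ∈ D, a ∉ W₁ := by grind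
    have hD2 : ∀ a ∈ D, ∀ w ∈ W₁, w ≠ c → a ∉ pen w := by grind
    have hD3 : ∀ a ∈ D, ∀ x ∈ W₁, G.Adj a x → x = c := by
      intro a ha x hx hax
      by_contra hxc
      rcases (hDmem a).1 ha with ⟨h1, h2⟩ | ⟨w, hw, haw⟩
      · exact hno x hx a h1 hxc h2 hax.symm
      · have := p3 w ((hU' w).2 (Or.inr hw)) x ((hU' x).2 (Or.inl hx)) a haw hax
        subst this
        exact hxc (hI' x hx hw)
    have hD4 : ∀ a ∈ D, ∀ w ∈ W₁, w ≠ c → ∀ b ∈ pen w, ¬ G.Adj a b := by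
      intro a ha w hw hwc b hb hab
      rcases (hDmem a).1 ha with ⟨h1, h2⟩ | ⟨w', hw', haw⟩
      · have := p3 w ((hU' w).2 (Or.inl hw)) a ((hU' a).2 (Or.inr h1)) b hb hab.symm
        subst this
        exact h2 (hI' a hw h1)
      · have := p4 w ((hU' w).2 (Or.inl hw)) w' ((hU' w').2 (Or.inr hw')) b hb a haw hab.symm
        subst this
        exact hwc (hI' w hw hw')
    have hpen₁ : PenOK G W₁ pen' := by
      refine ⟨?_, ?_, ?_, ?_⟩
      · intro w hw a ha
        by_cases h : w = c
        · rw [h, hpc] at ha; exact hD1 a ha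
        · rw [hpn w h] at ha; grind
      · intro w hw w' hw' a ha ha'
        by_cases h : w = c <;> by_cases h' : w' = c
        · rw [h, h']
        · rw [h, hpc] at ha; rw [hpn w' h'] at ha'
          exact absurd ha' (hD2 a ha w' hw' h')
        · rw [h', hpc] at ha'; rw [hpn w h] at ha
          exact absurd ha (hD2 a ha' w hw h)
        · rw [hpn w h] at ha; rw [hpn w' h'] at ha'; grind
      · intro w hw x hx a ha hax
        by_cases h : w = c
        · rw [h, hpc] at ha; rw [h]; exact hD3 a ha x hx hax
        · rw [hpn w h] at ha; grind
      · intro w hw w' hw' a ha b hb hab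
        by_cases h : w = c <;> by_cases h' : w' = c
        · rw [h, h']
        · rw [h, hpc] at ha; rw [hpn w' h'] at hb
          exact absurd hab (hD4 a ha w' hw' h' b hb)
        · rw [h', hpc] at hb; rw [hpn w h] at ha
          exact absurd hab.symm (hD4 b hb w hw h a ha)
        · rw [hpn w h] at ha; rw [hpn w' h'] at hb; grind
    -- the parts that do not take part in the contraction of `W₂`
    set R := ((W₁.erase r).image (fun v => ({v} : Finset V)) ∪ (W₁.erase c).image pen).erase ∅
      with hR
    have hRmem : ∀ X, X ∈ R ↔ X ≠ ∅ ∧ ((∃ w ∈ W₁, w ≠ r ∧ X = {w}) ∨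
        (∃ w ∈ W₁, w ≠ c ∧ X = pen w)) := by
      intro X
      simp only [hR, Finset.mem_erase, Finset.mem_union, Finset.mem_image]
      grind
    have hRr : ∀ X, X ∈ R ∪ {{r}} ↔ X ≠ ∅ ∧ ((∃ w ∈ W₁, X = {w}) ∨
        (∃ w ∈ W₁, w ≠ c ∧ X = pen w)) := by
      intro X
      rw [Finset.mem_union, hRmem, Finset.mem_singleton]
      have : ({r} : Finset V) ≠ ∅ := by simp
      grind
    have e1 : start r pen W = start c pen W₂ ∪ R := by
      ext X
      rw [Finset.mem_union, mem_start hr, mem_start hc₂, hRmem, ← and_or_left]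
      refine and_congr_right fun _ => ?_
      clear p1 p2 p3 p4 hD1 hD2 hD3 hD4 hno ih hpen₂ hpen₁ hRr hRmem hDmem hpn hW₁ hW₂ hW
      constructor
      · rintro (⟨w, hw, hwr, rfl⟩ | ⟨w, hw, rfl⟩)
        · by_cases h : w ∈ W₂ ∧ w ≠ c
          · exact Or.inl (Or.inl ⟨w, h.1, h.2, rfl⟩)
          · exact Or.inr (Or.inl ⟨w, by grind, hwr, rfl⟩)
        · by_cases h : w ∈ W₂
          · exact Or.inl (Or.inr ⟨w, h, rfl⟩)
          · exact Or.inr (Or.inr ⟨w, by grind, by grind, rfl⟩)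
      · rintro ((⟨w, hw, hwc, rfl⟩ | ⟨w, hw, rfl⟩) | (⟨w, hw, hwr, rfl⟩ | ⟨w, hw, hwc, rfl⟩))
        · exact Or.inl ⟨w, by grind, by grind, rfl⟩
        · exact Or.inr ⟨w, by grind, rfl⟩
        · exact Or.inl ⟨w, by grind, hwr, rfl⟩
        · exact Or.inr ⟨w, by grind, rfl⟩
    have e2 : start r pen' W₁ = ({D} \ {∅}) ∪ R := by
      ext X
      rw [Finset.mem_union, mem_start hr₁, hRmem, Finset.mem_sdiff, Finset.mem_singleton,
        Finset.mem_singleton]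
      clear p1 p2 p3 p4 hD1 hD2 hD3 hD4 hno ih hpen₂ hpen₁ hRr hRmem hDmem hW₁ hW₂ hW
      constructor
      · rintro ⟨h0, ⟨w, hw, hwr, rfl⟩ | ⟨w, hw, rfl⟩⟩
        · exact Or.inr ⟨h0, Or.inl ⟨w, hw, hwr, rfl⟩⟩
        · by_cases h : w = c
          · exact Or.inl ⟨by rw [h, hpc], h0⟩
          · exact Or.inr ⟨h0, Or.inr ⟨w, hw, h, hpn w h⟩⟩
      · rintro (⟨rfl, h0⟩ | ⟨h0, ⟨w, hw, hwr, rfl⟩ | ⟨w, hw, hwc, rfl⟩⟩)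
        · exact ⟨h0, Or.inr ⟨c, hc₁, hpc.symm⟩⟩
        · exact ⟨h0, Or.inl ⟨w, hw, hwr, rfl⟩⟩
        · exact ⟨h0, Or.inr ⟨w, hw, (hpn w hwc).symm⟩⟩
    have e3 : rest r pen W = rest r pen' W₁ := by
      ext x
      rw [mem_rest, mem_rest]
      clear p1 p2 p3 p4 hD1 hD2 hD3 hD4 hno ih hpen₂ hpen₁ hRr hRmem hW₁ hW₂ hW e1 e2
      constructor
      · rintro (⟨hx, hxr⟩ | ⟨w, hw, hx⟩)
        · by_cases h : x ∈ W₁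
          · exact Or.inl ⟨h, hxr⟩
          · refine Or.inr ⟨c, hc₁, ?_⟩
            rw [hpc, hDmem]
            exact Or.inl ⟨by grind, by grind⟩
        · by_cases h : w ∈ W₂
          · refine Or.inr ⟨c, hc₁, ?_⟩
            rw [hpc, hDmem]
            exact Or.inr ⟨w, h, hx⟩
          · exact Or.inr ⟨w, by grind, by rwa [hpn w (by grind)]⟩
      · rintro (⟨hx, hxr⟩ | ⟨w, hw, hx⟩)
        · exact Or.inl ⟨by grind, hxr⟩
        · by_cases h : w = c
          · rw [h, hpc, hDmem] at hx
            rcases hx with ⟨h1, h2⟩ | ⟨w', hw', hx⟩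
            · exact Or.inl ⟨by grind, by grind⟩
            · exact Or.inr ⟨w', by grind, hx⟩
          · rw [hpn w h] at hx
            exact Or.inr ⟨w, by grind, hx⟩
    rw [e1, e3]
    refine Relation.ReflTransGen.trans ?_ (e2 ▸ ih W₁ pen' r (by omega) hr₁ hpen₁ hW₁)
    refine (ih W₂ pen c (by omega) hc₂ hpen₂ hW₂).frame (S := {{r}}) (U := D) (start_isPart hpen₂ hc₂)
      ?_ ?_ ?_ ?_
    · intro Y hY x hx hxD
      rcases ((hRmem Y).1 hY).2 with ⟨w, hw, -, rfl⟩ | ⟨w, hw, hwc, rfl⟩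
      · rw [Finset.mem_singleton] at hx
        subst hx
        exact hD1 x hxD hw
      · exact hD2 x hxD w hw hwc hx
    · intro Y hY hYc x hx u hu hxu
      rcases ((hRr Y).1 hY).2 with ⟨w, hw, rfl⟩ | ⟨w, hw, hwc, rfl⟩
      · rw [Finset.mem_singleton] at hx
        subst hx
        exact hYc (by rw [hD3 u hu x hw hxu.symm])
      · exact hD4 u hu w hw hwc x hx hxu.symm
    · intro Y hY hadj
      rw [redAdj_iff] at hadj
      obtain ⟨-, ⟨a, ha, b, hb, hab⟩, ⟨a', ha', b', hb', hab'⟩⟩ := hadj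
      rw [Finset.mem_singleton] at ha ha'
      subst ha ha'
      rcases ((hRr Y).1 hY).2 with ⟨w, hw, rfl⟩ | ⟨w, hw, hwc, rfl⟩
      · rw [Finset.mem_singleton] at hb hb'
        subst hb hb'
        exact hab' hab
      · exact hwc (p3 w ((hU' w).2 (Or.inl hw)) _ ((hU' _).2 (Or.inl hc₁)) b hb hab.symm).symm
    · rw [maxRedDeg_le_iff]
      intro Z hZ
      rcases ((hRr Z).1 hZ).2 with ⟨w, hw, rfl⟩ | ⟨w, hw, hwc, rfl⟩
      · refine (card_le_add_two (T := ∅) (a := pen w) (b := pen w) (d := 0) ?_ (by simp)).trans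
          (by omega)
        intro T hT
        rw [Finset.mem_filter, hRr, redAdj_iff] at hT
        obtain ⟨⟨-, hT⟩, -, ⟨a, ha, b, hb, hab⟩, ⟨a', ha', b', hb', hab'⟩⟩ := hT
        rw [Finset.mem_singleton] at ha ha'
        subst ha ha'
        rcases hT with ⟨w', hw', rfl⟩ | ⟨w', hw', hwc', rfl⟩
        · rw [Finset.mem_singleton] at hb hb'
          subst hb hb'
          exact absurd hab hab'
        · rw [p3 w' ((hU' w').2 (Or.inl hw')) _ ((hU' _).2 (Or.inl hw)) b hb hab.symm]
          simp
      · refine (card_le_add_two (T := ∅) (a := {w}) (b := {w}) (d := 0) ?_ (by simp)).trans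
          (by omega)
        intro T hT
        rw [Finset.mem_filter, hRr, redAdj_iff] at hT
        obtain ⟨⟨-, hT⟩, hne, ⟨a, ha, b, hb, hab⟩, -⟩ := hT
        rcases hT with ⟨w', hw', rfl⟩ | ⟨w', hw', hwc', rfl⟩
        · rw [Finset.mem_singleton] at hb
          subst hb
          rw [p3 w ((hU' w).2 (Or.inl hw)) _ ((hU' _).2 (Or.inl hw')) a ha hab]
          simp
        · refine absurd ?_ hne
          rw [p4 w ((hU' w).2 (Or.inl hw)) w' ((hU' w').2 (Or.inl hw')) a ha b hb hab]

/-! ### Blocks -/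

/-- A connected vertex set without a cut vertex lies in a block. -/
theorem exists_block [Fintype V] (G : SimpleGraph V) (s : Finset V) (hs : s.Nonempty)
    (hc : (G.induce (s : Set V)).Connected) (hcut : ¬ HasCutVertex (G.induce (s : Set V))) :
    ∃ t, s ⊆ t ∧ IsBlock G t := by
  obtain ⟨t, hst, ht⟩ := Finite.exists_le_maximal (p := fun t : Finset V =>
    (G.induce (t : Set V)).Connected ∧ ¬ HasCutVertex (G.induce (t : Set V))) ⟨hc, hcut⟩
  exact ⟨t, hst, hs.mono hst, ht.prop.1, ht.prop.2, fun u hu h1 h2 =>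
    ht.eq_of_le ⟨h1, h2⟩ hu⟩

/-- The whole graph is contracted onto a root without pendant parts, and the last two parts are
merged. -/
theorem tww_le_add_two [Fintype V] (G : SimpleGraph V) (hG : G.Connected) {d : ℕ}
    (hd : ∀ s : Finset V, s.Nonempty → (G.induce (s : Set V)).Connected →
      ¬ HasCutVertex (G.induce (s : Set V)) → (G.induce (s : Set V)).toTrigraph.tww ≤ d) :
    G.toTrigraph.tww ≤ d + 2 := by
  have := hG.nonempty
  let r : V := Classical.arbitrary V
  have hr : r ∈ (Finset.univ : Finset V) := Finset.mem_univ r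
  have hpen : PenOK G Finset.univ (fun _ => ∅) := ⟨by simp, by simp, by simp, by simp⟩
  have hconn : (G.induce ((Finset.univ : Finset V) : Set V)).Connected := by
    rw [Finset.coe_univ]
    exact (SimpleGraph.induceUnivIso G).connected_iff.2 hG
  have h := reach_main hd _ Finset.univ (fun _ => ∅) r le_rfl hr hpen hconn
  have hs : ∀ X, X ∈ start r (fun _ => ∅) Finset.univ ↔ ∃ w, w ≠ r ∧ X = {w} := by
    intro X
    rw [mem_start hr]
    simp only [Finset.mem_univ, true_and]
    constructor
    · rintro ⟨h0, h | ⟨-, h⟩⟩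
      · exact h
      · exact absurd h h0
    · rintro ⟨w, hw, rfl⟩
      exact ⟨by simp, Or.inl ⟨w, hw, rfl⟩⟩
  have hrest : rest r (fun _ => ∅) Finset.univ = (Finset.univ : Finset V).erase r := by
    ext x; simp [mem_rest]
  have h2 := h.frame (S := ∅) (R := {{r}}) (start_isPart hpen hr)
    (by simp [hrest]) (by simp) (by simp [redAdj_iff])
    (maxRedDeg_le_of_card _ _ _ (by simp))
  have e1 : start r (fun _ => ∅) Finset.univ ∪ {{r}} = discretePart V := by
    ext X
    rw [Finset.mem_union, hs, Finset.mem_singleton, discretePart, Finset.mem_image]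
    constructor
    · rintro (⟨w, -, rfl⟩ | rfl)
      · exact ⟨w, Finset.mem_univ _, rfl⟩
      · exact ⟨r, Finset.mem_univ _, rfl⟩
    · rintro ⟨w, -, rfl⟩
      by_cases hw : w = r
      · exact Or.inr (by rw [hw])
      · exact Or.inl ⟨w, hw, rfl⟩
  rw [e1, hrest] at h2
  refine tww_le_of_reach G _ (Relation.ReflTransGen.trans h2 ?_)
  refine reach_merge (by simp) ?_ ((Finset.univ : Finset V).erase r) {r} ?_ (by simp) ?_
    (maxRedDeg_le_of_card _ _ _ (by simp))
  · simp only [Finset.mem_singleton]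
    exact (Finset.ne_empty_of_mem hr).symm
  · by_cases h0 : (Finset.univ : Finset V).erase r = ∅
    · exact Or.inl h0
    · right
      simp [h0]
  · intro X hX
    have hu : (Finset.univ : Finset V).erase r ∪ {r} = Finset.univ := by
      rw [Finset.union_comm, ← Finset.insert_eq, Finset.insert_erase hr]
    rw [hu]
    simp only [Finset.mem_singleton, Finset.mem_union, Finset.mem_sdiff]
    tauto

/-- if `G` is connected with biconnected components `C 0, …, C (ℓ-1)`,
then `max_i tww(C i) ≤ tww(G) ≤ max_i tww(C i) + 2`. -/
theorem tww_blocks {V : Type*} [Fintype V] (G : SimpleGraph V) (hG : G.Connected)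
    (ℓ : ℕ) (C : Fin ℓ → Finset V)
    (hinj : Function.Injective C)
    (hblocks : ∀ i, IsBlock G (C i))
    (hall : ∀ s : Finset V, IsBlock G s → ∃ i, s = C i) :
    (Finset.univ.sup fun i => ((G.induce ((C i : Finset V) : Set V)).toTrigraph).tww) ≤
        (G.toTrigraph).tww ∧
      (G.toTrigraph).tww ≤
        (Finset.univ.sup fun i => ((G.induce ((C i : Finset V) : Set V)).toTrigraph).tww)
          + 2 := by
  refine ⟨Finset.sup_le fun i _ => ?_, tww_le_add_two G hG fun s hs hc hcut => ?_⟩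
  · have : Nonempty ((C i : Finset V) : Set V) := (hblocks i).1.to_subtype
    exact tww_mono (SimpleGraph.Embedding.induce _)
  · obtain ⟨t, hst, ht⟩ := exists_block G s hs hc hcut
    obtain ⟨i, rfl⟩ := hall t ht
    have : Nonempty (s : Set V) := hs.to_subtype
    refine le_trans (tww_mono (G.induceHomOfLE (by exact_mod_cast hst))) ?_
    exact Finset.le_sup (f := fun i => ((G.induce ((C i : Finset V) : Set V)).toTrigraph).tww)
      (Finset.mem_univ i)

end
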